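/- arXiv:1604.03336 — 6 statements merged into one kernel-verified Lean document; each statement's English description precedes it below -/
import Mathlib

section
/- Let P be a probability measure on X^n and let A be a Markov kernel from X^n to a measurable space Z that is (η,τ,ν)-typically stable with respect to P in the oracle sense, with η ≤ ln 2. Then A is (2η, 3τ, 2ν)-typically stable in the pairwise sense: for X and Y drawn independently from P, with probability at least 1−2ν over the pair (X,Y), the measures A(X) and A(Y) are (2η,3τ)-indistinguishable. -/
/-! Indistinguishability composes: if `μ` and `ρ` are both `(η, τ)`-close to an oracle `W`, chaining
the two inequalities gives `μ O ≤ e^(2η) ρ O + (e^η + 1) τ`, and `e^η ≤ 2`. Hence the set of good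
pairs contains `S ×ˢ S`, with `S` the set of good points, and this has measure
`(P S)² ≥ (1 - ν)² ≥ 1 - 2ν`. The set `S` need not be measurable, but `Measure.prod_prod` holds for
arbitrary sets. -/

open MeasureTheory ProbabilityTheory

/-- Two measures are `(η, τ)`-indistinguishable if, for every measurable set `O`,
`μ O ≤ e^η · ρ O + τ` and `ρ O ≤ e^η · μ O + τ`. -/
def Indist {Ω : Type*} [MeasurableSpace Ω] (η τ : ℝ) (μ ρ : Measure Ω) : Prop :=
  ∀ O : Set Ω, MeasurableSet O →
    μ O ≤ ENNReal.ofReal (Real.exp η) * ρ O + ENNReal.ofReal τ ∧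
    ρ O ≤ ENNReal.ofReal (Real.exp η) * μ O + ENNReal.ofReal τ

/-- One-sided composition through an intermediate value `w`. -/
lemma le_of_le_of_le_oracle {η τ : ℝ} (hτ : 0 ≤ τ) (hη2 : η ≤ Real.log 2) {a w b : ENNReal}
    (h₁ : a ≤ ENNReal.ofReal (Real.exp η) * w + ENNReal.ofReal τ)
    (h₂ : w ≤ ENNReal.ofReal (Real.exp η) * b + ENNReal.ofReal τ) :
    a ≤ ENNReal.ofReal (Real.exp (2 * η)) * b + ENNReal.ofReal (3 * τ) := by
  have hexp : Real.exp η ≤ 2 := (Real.le_log_iff_exp_le two_pos).1 hη2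
  have hpos := (Real.exp_pos η).le
  calc a ≤ ENNReal.ofReal (Real.exp η) *
        (ENNReal.ofReal (Real.exp η) * b + ENNReal.ofReal τ) + ENNReal.ofReal τ := by
        refine h₁.trans ?_
        gcongr
    _ = ENNReal.ofReal (Real.exp (2 * η)) * b + ENNReal.ofReal (Real.exp η * τ + τ) := by
        rw [two_mul, Real.exp_add, ENNReal.ofReal_mul hpos,
          ENNReal.ofReal_add (mul_nonneg hpos hτ) hτ, ENNReal.ofReal_mul hpos]
        ring
    _ ≤ _ := by
        gcongr
        nlinarith

/-- Two measures indistinguishable from a common oracle are indistinguishable from each other. -/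
lemma Indist.of_common_oracle {Ω : Type*} [MeasurableSpace Ω] {η τ : ℝ} (hτ : 0 ≤ τ)
    (hη2 : η ≤ Real.log 2) {μ ρ W : Measure Ω} (hμ : Indist η τ μ W) (hρ : Indist η τ ρ W) :
    Indist (2 * η) (3 * τ) μ ρ := fun O hO =>
  ⟨le_of_le_of_le_oracle hτ hη2 (hμ O hO).1 (hρ O hO).2,
    le_of_le_of_le_oracle hτ hη2 (hρ O hO).1 (hμ O hO).2⟩

/-- If a Markov kernel `A` is `(η,τ,ν)`-typically stable w.r.t. `P` in the
oracle sense (with `η ≤ ln 2`), then it is `(2η, 3τ, 2ν)`-typically stable in the pairwise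
sense: with probability at least `1 − 2ν` over independent `X, Y ∼ P`, the measures `A X`
and `A Y` are `(2η, 3τ)`-indistinguishable. -/
theorem typicallyStable_oracle_implies_pairwise
    {X Z : Type*} [MeasurableSpace X] [MeasurableSpace Z]
    (P : Measure X) [IsProbabilityMeasure P]
    (A : Kernel X Z) [IsMarkovKernel A]
    (η τ ν : ℝ) (hτ : 0 ≤ τ) (hν : 0 ≤ ν) (hη : 0 ≤ η) (hη2 : η ≤ Real.log 2)
    (hTS : ∃ W : Measure Z, IsProbabilityMeasure W ∧
      P {x | Indist η τ (A x) W} ≥ ENNReal.ofReal (1 - ν)) :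
    (P.prod P) {p : X × X | Indist (2 * η) (3 * τ) (A p.1) (A p.2)} ≥
      ENNReal.ofReal (1 - 2 * ν) := by
  obtain ⟨W, -, hW⟩ := hTS
  set S := {x | Indist η τ (A x) W}
  have hsub : S ×ˢ S ⊆ {p : X × X | Indist (2 * η) (3 * τ) (A p.1) (A p.2)} :=
    fun p hp => Indist.of_common_oracle hτ hη2 hp.1 hp.2
  refine ge_iff_le.2 (le_trans ?_ (measure_mono hsub))
  rw [Measure.prod_prod]
  -- For `ν > 1` the square `(1 - ν)²` says nothing about `P S`, but then `1 - 2ν < 0`.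
  rcases le_total ν 1 with h | h
  · calc ENNReal.ofReal (1 - 2 * ν) ≤ ENNReal.ofReal ((1 - ν) * (1 - ν)) :=
          ENNReal.ofReal_le_ofReal (by nlinarith)
      _ = ENNReal.ofReal (1 - ν) * ENNReal.ofReal (1 - ν) := ENNReal.ofReal_mul (by linarith)
      _ ≤ P S * P S := mul_le_mul' hW hW
  · rw [ENNReal.ofReal_of_nonpos (by linarith)]
    exact zero_le
end

section
/- (Near-independence lemma, conditional form.) Let P be a probability measure on X^n, let A be a Markov kernel from X^n to a measurable space Z, and let X and Y be independent random variables each with law P. Suppose S ⊆ X^n is a measurable set satisfying Pr[X ∈ S and Y ∈ S] ≥ 1−ν and such that for every x, y ∈ S the measures A(x) and A(y) are (η,τ)-indistinguishable. Then for every measurable set O ⊆ X^n × Z, Pr[(X, A(X)) ∈ O | X ∈ S] ≤ e^η · Pr[(X, A(Y)) ∈ O | X ∈ S and Y ∈ S] + τ, where (X, A(X)) denotes a pair consisting of X and a sample drawn from A(X), and (X, A(Y)) denotes a pair consisting of X and a sample drawn from A(Y) (so that the second coordinate is independent of the first). -/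
/-!
For `x ∈ S`, averaging the inequality `A x U ≤ e^η · A y U + τ` over `y ∈ S` bounds `P S * A x U`
by `e^η · Q U + τ · P S`, where `Q` is the (unnormalised) law of `A(Y)` on the event `Y ∈ S`.
Applying this to the sections `U = {z | (x, z) ∈ O}` and integrating over `x ∈ S` gives the claim
multiplied by `(P S)²`; one then divides.
-/

open MeasureTheory ProbabilityTheory

/-- The indistinguishability inequality averaged over the second point `y ∈ S`. -/
lemma mul_kernel_le_bind {X Z : Type*} [MeasurableSpace X] [MeasurableSpace Z]
    (P : Measure X) (A : Kernel X Z) (η τ : ℝ)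
    (S : Set X) (hS : MeasurableSet S)
    (hind : ∀ x ∈ S, ∀ y ∈ S, Indist η τ (A x) (A y))
    (x : X) (hx : x ∈ S) (U : Set Z) (hU : MeasurableSet U) :
    P S * A x U ≤ ENNReal.ofReal (Real.exp η) * (P.restrict S).bind A U +
      ENNReal.ofReal τ * P S := by
  have hA : Measurable fun y => A y U := A.measurable_coe hU
  calc P S * A x U = ∫⁻ _ in S, A x U ∂P := by
        rw [setLIntegral_const, mul_comm]
    _ ≤ ∫⁻ y in S, (ENNReal.ofReal (Real.exp η) * A y U + ENNReal.ofReal τ) ∂P :=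
        setLIntegral_mono' hS fun y hy => (hind x hx y hy U hU).1
    _ = _ := by
        rw [lintegral_add_right _ measurable_const, lintegral_const_mul _ hA,
          setLIntegral_const, Measure.bind_apply hU A.aemeasurable]

/-- The near-independence inequality before dividing by `(P S)²`. -/
lemma mul_compProd_le_prod {X Z : Type*} [MeasurableSpace X] [MeasurableSpace Z]
    (P : Measure X) [IsProbabilityMeasure P] (A : Kernel X Z) [IsMarkovKernel A] (η τ : ℝ)
    (S : Set X) (hS : MeasurableSet S)
    (hind : ∀ x ∈ S, ∀ y ∈ S, Indist η τ (A x) (A y))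
    (O : Set (X × Z)) (hO : MeasurableSet O) :
    P S * ((P.restrict S) ⊗ₘ A) O ≤
      ENNReal.ofReal (Real.exp η) * ((P.restrict S).prod ((P.restrict S).bind A)) O +
      ENNReal.ofReal τ * (P S * P S) := by
  rw [Measure.compProd_apply hO, Measure.prod_apply hO,
    ← lintegral_const_mul _ (Kernel.measurable_kernel_prodMk_left hO),
    ← lintegral_const_mul _ (measurable_measure_prodMk_left hO), ← mul_assoc,
    ← setLIntegral_const, ← lintegral_add_right _ measurable_const]
  exact setLIntegral_mono' hS fun x hx =>
    mul_kernel_le_bind P A η τ S hS hind x hx _ (measurable_prodMk_left hO)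

/-- near-independence lemma, conditional form.  Let `X, Y` be independent
with law `P` and let `S` be a measurable set with `Pr[X ∈ S ∧ Y ∈ S] ≥ 1 − ν` such that
`A x ≈_{η,τ} A y` for all `x, y ∈ S`.  Then for every measurable `O ⊆ X^n × Z`,
`Pr[(X, A(X)) ∈ O | X ∈ S] ≤ e^η · Pr[(X, A(Y)) ∈ O | X ∈ S ∧ Y ∈ S] + τ`.
Here `Pr[(X, A(X)) ∈ O | X ∈ S] = ((P.restrict S) ⊗ₘ A) O / P S`, and
`Pr[(X, A(Y)) ∈ O | X,Y ∈ S] = ((P.restrict S).prod ((P.restrict S).bind A)) O / (P S * P S)`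
(the second coordinate is drawn from `A(Y)` with `Y` independent of `X`). -/
theorem near_independence_conditional
    {X Z : Type*} [MeasurableSpace X] [MeasurableSpace Z]
    (P : Measure X) [IsProbabilityMeasure P]
    (A : Kernel X Z) [IsMarkovKernel A]
    (η τ ν : ℝ) (hτ : 0 ≤ τ)
    (S : Set X) (hS : MeasurableSet S)
    (hSbig : (P.prod P) (S ×ˢ S) ≥ ENNReal.ofReal (1 - ν))
    (hind : ∀ x ∈ S, ∀ y ∈ S, Indist η τ (A x) (A y))
    (O : Set (X × Z)) (hO : MeasurableSet O) :
    ((P.restrict S) ⊗ₘ A) O / P S ≤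
      ENNReal.ofReal (Real.exp η) *
        (((P.restrict S).prod ((P.restrict S).bind (fun y => A y))) O / (P S * P S)) +
      ENNReal.ofReal τ := by
  have hmain := mul_compProd_le_prod P A η τ S hS hind O hO
  have hfin : P S ≠ ⊤ := measure_ne_top P S
  rcases eq_or_ne (P S) 0 with h0 | h0
  · simp [Measure.restrict_eq_zero.mpr h0]
  · have hp0 : P S * P S ≠ 0 := mul_ne_zero h0 h0
    have hpt : P S * P S ≠ ⊤ := ENNReal.mul_ne_top hfin hfin
    rw [← ENNReal.mul_div_mul_left _ _ h0 hfin, ENNReal.div_le_iff hp0 hpt, add_mul, mul_assoc,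
      ENNReal.div_mul_cancel hp0 hpt]
    exact hmain
end

section
/- (Near-independence lemma, unconditional form.) Let P be a probability measure on X^n, let A be a Markov kernel from X^n to a measurable space Z, and let X and Y be independent random variables each with law P. Suppose S ⊆ X^n is a measurable set satisfying Pr[X ∈ S and Y ∈ S] ≥ 1−ν and such that for every x, y ∈ S the measures A(x) and A(y) are (η,τ)-indistinguishable. If η < 1 and ν < 1/10, then for every measurable set O ⊆ X^n × Z, Pr[(X, A(X)) ∈ O] ≤ e^η · Pr[(X, A(Y)) ∈ O] + τ + 5ν, where (X, A(X)) denotes a pair consisting of X and a sample drawn from A(X), and (X, A(Y)) denotes a pair consisting of X and a sample drawn from A(Y) (so that the second coordinate is independent of the first). -/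
/-!
Write `O_x` for the section of `O` over `x`. For all `x, y`,
`A x O_x ≤ e^η * A y O_x + τ + 1_{(S × S)ᶜ}(x, y)`:
on `S × S` this is indistinguishability, and off `S × S` the indicator alone dominates, since
`A x` is a probability measure. Integrating over `y` and then over `x` against `P`, the left side
becomes `(P ⊗ₘ A) O`, the first term on the right becomes `e^η * (P.prod (P.bind A)) O`, and the
last term is at most `ν`. This gives the inequality even with `ν` in place of `5 * ν`.
-/

open MeasureTheory ProbabilityTheory

/-- near-independence lemma, unconditional form.  Let `X, Y` be independent
with law `P`, and let `S` be a measurable set with `Pr[X ∈ S ∧ Y ∈ S] ≥ 1 − ν` such that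
`A x ≈_{η,τ} A y` for all `x, y ∈ S`.  If `η < 1` and `ν < 1/10`, then for every
measurable `O`, `Pr[(X, A(X)) ∈ O] ≤ e^η · Pr[(X, A(Y)) ∈ O] + τ + 5ν`, where the law of
`(X, A(X))` is `P ⊗ₘ A` and the law of `(X, A(Y))` (second coordinate independent of the
first) is `P.prod (P.bind A)`. -/
theorem near_independence_unconditional
    {X Z : Type*} [MeasurableSpace X] [MeasurableSpace Z]
    (P : Measure X) [IsProbabilityMeasure P]
    (A : Kernel X Z) [IsMarkovKernel A]
    (η τ ν : ℝ) (hτ : 0 ≤ τ) (hν : 0 ≤ ν)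
    (hη : η < 1) (hν10 : ν < 1 / 10)
    (S : Set X) (hS : MeasurableSet S)
    (hSbig : (P.prod P) (S ×ˢ S) ≥ ENNReal.ofReal (1 - ν))
    (hind : ∀ x ∈ S, ∀ y ∈ S, Indist η τ (A x) (A y))
    (O : Set (X × Z)) (hO : MeasurableSet O) :
    (P ⊗ₘ A) O ≤
      ENNReal.ofReal (Real.exp η) * ((P.prod (P.bind (fun y => A y))) O) +
      ENNReal.ofReal (τ + 5 * ν) := by
  set T : Set (X × X) := (S ×ˢ S)ᶜ with hTdef
  have hT : MeasurableSet T := (hS.prod hS).compl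
  have hTν : (P.prod P) T ≤ ENNReal.ofReal ν := by
    rw [hTdef, prob_compl_eq_one_sub (hS.prod hS)]
    refine (tsub_le_tsub_left hSbig 1).trans ?_
    rw [← ENNReal.ofReal_one, ← ENNReal.ofReal_sub _ (by linarith)]
    simp
  have hbind : IsProbabilityMeasure (P.bind (fun y => A y)) :=
    inferInstanceAs (IsProbabilityMeasure (P.bind A))
  -- The pointwise bound, integrated over `y` for a fixed `x`.
  have key : ∀ x, A x (Prod.mk x ⁻¹' O) ≤
      ENNReal.ofReal (Real.exp η) * (P.bind (fun y => A y)) (Prod.mk x ⁻¹' O)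
        + ENNReal.ofReal τ + P (Prod.mk x ⁻¹' T) := by
    intro x
    have hOx : MeasurableSet (Prod.mk x ⁻¹' O) := measurable_prodMk_left hO
    have hTx : MeasurableSet (Prod.mk x ⁻¹' T) := measurable_prodMk_left hT
    have hAm : Measurable fun y => A y (Prod.mk x ⁻¹' O) := A.measurable_coe hOx
    calc A x (Prod.mk x ⁻¹' O) = ∫⁻ _, A x (Prod.mk x ⁻¹' O) ∂P := by simp
      _ ≤ ∫⁻ y, (ENNReal.ofReal (Real.exp η) * A y (Prod.mk x ⁻¹' O) + ENNReal.ofReal τ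
            + (Prod.mk x ⁻¹' T).indicator 1 y) ∂P := by
          refine lintegral_mono fun y => ?_
          by_cases h : (x, y) ∈ S ×ˢ S
          · exact ((hind x h.1 y h.2 _ hOx).1).trans le_self_add
          · have hy : y ∈ Prod.mk x ⁻¹' T := h
            rw [Set.indicator_of_mem hy]
            exact prob_le_one.trans le_add_self
      _ = _ := by
          rw [lintegral_add_right _ (measurable_one.indicator hTx),
            lintegral_add_right _ measurable_const, lintegral_const_mul _ hAm,
            Measure.bind_apply hOx A.measurable.aemeasurable, lintegral_indicator_one hTx]
          simp
  have hBm : Measurable fun x => (P.bind (fun y => A y)) (Prod.mk x ⁻¹' O) :=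
    measurable_measure_prodMk_left hO
  have hPm : Measurable fun x => P (Prod.mk x ⁻¹' T) := measurable_measure_prodMk_left hT
  calc (P ⊗ₘ A) O = ∫⁻ x, A x (Prod.mk x ⁻¹' O) ∂P := Measure.compProd_apply hO
    _ ≤ ∫⁻ x, (ENNReal.ofReal (Real.exp η) * (P.bind (fun y => A y)) (Prod.mk x ⁻¹' O)
          + ENNReal.ofReal τ + P (Prod.mk x ⁻¹' T)) ∂P := lintegral_mono key
    _ = ENNReal.ofReal (Real.exp η) * (P.prod (P.bind (fun y => A y))) O
          + ENNReal.ofReal τ + (P.prod P) T := by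
        rw [lintegral_add_right _ hPm, lintegral_add_right _ measurable_const,
          lintegral_const_mul _ hBm, Measure.prod_apply hO, Measure.prod_apply hT]
        simp
    _ ≤ _ := by
        rw [add_assoc]
        gcongr
        calc ENNReal.ofReal τ + (P.prod P) T
            ≤ ENNReal.ofReal τ + ENNReal.ofReal ν := by gcongr
          _ = ENNReal.ofReal (τ + ν) := (ENNReal.ofReal_add hτ hν).symm
          _ ≤ ENNReal.ofReal (τ + 5 * ν) := ENNReal.ofReal_le_ofReal (by linarith)
end

section
/- (Generalization via typical stability.) Let P be a probability measure on X^n, let γ : ℝ_{>0} → ℝ_{≥0} be non-decreasing, and let Q be a measurable space of real-valued queries on X^n with a jointly measurable evaluation map (q, x) ↦ q(x), such that every q ∈ Q is γ-concentrated with respect to P. Let A be a Markov kernel from X^n to Q, and suppose S ⊆ X^n is a measurable set with Pr_{X,Y iid ∼ P}[X ∈ S and Y ∈ S] ≥ 1−ν such that for all x, y ∈ S the measures A(x) and A(y) are (η,τ)-indistinguishable. Assume η < 1 and ν < 1/10, and let α > 0 satisfy e^{−γ(α)} ≤ ν. Let X ∼ P and let q_X be a sample drawn from A(X). Then Pr[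 |q_X(X) − E_{T∼P}[q_X(T)]| > α ] ≤ (e^η + 5)·ν + τ. -/
/-!
Write `E` for the event that the generalization error exceeds `α`, and `E_x` for its section at a
dataset `x`. Since `P(S) ≥ P(S)² ≥ 1 - ν > 0`, the set `S` contains some dataset `y`, and datasets
outside `S` contribute at most `ν` to the probability of `E`. For `x ∈ S`, indistinguishability
gives `A(x)(E_x) ≤ e^η A(y)(E_x) + τ`. The query distribution `A(y)` no longer depends on `x`, so by
Tonelli the average of `A(y)(E_x)` over `x ∼ P` is that of `P(E^q)` over `q ∼ A(y)`, where `E^q` is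
the section of `E` at the query `q`; concentration bounds it by `ν`. Altogether the probability is
at most `(e^η + 1) ν + τ`.
-/

open MeasureTheory ProbabilityTheory

/-- generalization via typical stability.  `Q` is a measurable space of
real-valued queries on `X` with jointly measurable evaluation `eval`, each of which is
`γ`-concentrated w.r.t. `P` (for a function `γ` that is non-decreasing and non-negative
on the positive reals).  `A` is a Markov kernel from datasets to queries which is
typically stable, as witnessed by the set `S`.  If `η < 1`, `ν < 1/10`, `α > 0` and
`e^{−γ α} ≤ ν`, then the probability (under the joint law `P ⊗ₘ A` of `(X, q_X)`)
that the generalization error `|q_X(X) − E_{T∼P}[q_X(T)]|` exceeds `α` is at most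
`(e^η + 5)ν + τ`. -/
theorem generalization_via_typical_stability
    {X Q : Type*} [MeasurableSpace X] [MeasurableSpace Q]
    (P : Measure X) [IsProbabilityMeasure P]
    (eval : Q → X → ℝ)
    (hEval : Measurable (fun p : Q × X => eval p.1 p.2))
    (γ : ℝ → ℝ) (hγmono : MonotoneOn γ (Set.Ioi (0 : ℝ)))
    (hγnonneg : ∀ α > (0 : ℝ), 0 ≤ γ α)
    (hconc : ∀ (q : Q) (α : ℝ), 0 < α →
      P {x | |eval q x - ∫ y, eval q y ∂P| > α} < ENNReal.ofReal (Real.exp (-(γ α))))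
    (A : Kernel X Q) [IsMarkovKernel A]
    (η τ ν : ℝ) (hτ : 0 ≤ τ) (hν : 0 ≤ ν)
    (hη : η < 1) (hν10 : ν < 1 / 10)
    (S : Set X) (hS : MeasurableSet S)
    (hSbig : (P.prod P) (S ×ˢ S) ≥ ENNReal.ofReal (1 - ν))
    (hind : ∀ x ∈ S, ∀ y ∈ S, Indist η τ (A x) (A y))
    (α : ℝ) (hα : 0 < α) (hαν : Real.exp (-(γ α)) ≤ ν) :
    (P ⊗ₘ A) {p : X × Q | |eval p.2 p.1 - ∫ t, eval p.2 t ∂P| > α} ≤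
      ENNReal.ofReal ((Real.exp η + 5) * ν + τ) := by
  set E : Set (X × Q) := {p : X × Q | |eval p.2 p.1 - ∫ t, eval p.2 t ∂P| > α} with hE
  have hmean : Measurable (fun q : Q => ∫ t, eval q t ∂P) :=
    (hEval.stronglyMeasurable.integral_prod_right (ν := P)).measurable
  have hEmeas : MeasurableSet E := by
    have h1 : Measurable (fun p : X × Q => eval p.2 p.1) := hEval.comp measurable_swap
    have h2 : Measurable (fun p : X × Q => |eval p.2 p.1 - ∫ t, eval p.2 t ∂P|) :=
      (h1.sub (hmean.comp measurable_snd)).abs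
    exact measurableSet_lt measurable_const h2
  have hPS : ENNReal.ofReal (1 - ν) ≤ P S := by
    rw [ge_iff_le, Measure.prod_prod] at hSbig
    exact hSbig.trans (mul_le_of_le_one_right' prob_le_one)
  have hPSc : P Sᶜ ≤ ENNReal.ofReal ν := by
    rw [prob_compl_eq_one_sub hS, tsub_le_iff_left]
    calc (1 : ENNReal) = ENNReal.ofReal ((1 - ν) + ν) := by simp
      _ = ENNReal.ofReal (1 - ν) + ENNReal.ofReal ν :=
        ENNReal.ofReal_add (by linarith) hν
      _ ≤ P S + ENNReal.ofReal ν := by gcongr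
  obtain ⟨y, hy⟩ : S.Nonempty := by
    apply nonempty_of_measure_ne_zero (μ := P)
    have : 0 < ENNReal.ofReal (1 - ν) := ENNReal.ofReal_pos.mpr (by linarith)
    exact (this.trans_le hPS).ne'
  -- For the fixed query distribution `A y`, the data is independent of the query.
  have hindep : ∫⁻ x, A y (Prod.mk x ⁻¹' E) ∂P ≤ ENNReal.ofReal ν := by
    rw [← Measure.prod_apply hEmeas, Measure.prod_apply_symm hEmeas]
    calc ∫⁻ q, P ((fun x => (x, q)) ⁻¹' E) ∂(A y)
        ≤ ∫⁻ _, ENNReal.ofReal ν ∂(A y) :=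
          lintegral_mono fun q => (hconc q α hα).le.trans (ENNReal.ofReal_le_ofReal hαν)
      _ = ENNReal.ofReal ν := by simp
  have hsec : Measurable (fun x => A y (Prod.mk x ⁻¹' E)) := measurable_measure_prodMk_left hEmeas
  have hOnS : ∫⁻ x in S, A x (Prod.mk x ⁻¹' E) ∂P ≤
      ENNReal.ofReal (Real.exp η) * ENNReal.ofReal ν + ENNReal.ofReal τ := by
    calc ∫⁻ x in S, A x (Prod.mk x ⁻¹' E) ∂P
        ≤ ∫⁻ x in S, (ENNReal.ofReal (Real.exp η) * A y (Prod.mk x ⁻¹' E)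
            + ENNReal.ofReal τ) ∂P :=
          setLIntegral_mono' hS fun x hx =>
            (hind x hx y hy _ (measurable_prodMk_left hEmeas)).1
      _ ≤ ∫⁻ x, (ENNReal.ofReal (Real.exp η) * A y (Prod.mk x ⁻¹' E)
            + ENNReal.ofReal τ) ∂P := setLIntegral_le_lintegral _ _
      _ = ENNReal.ofReal (Real.exp η) * ∫⁻ x, A y (Prod.mk x ⁻¹' E) ∂P
            + ENNReal.ofReal τ := by
          rw [lintegral_add_right _ measurable_const, lintegral_const_mul _ hsec]
          simp
      _ ≤ _ := by gcongr
  have hOffS : ∫⁻ x in Sᶜ, A x (Prod.mk x ⁻¹' E) ∂P ≤ ENNReal.ofReal ν := by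
    calc ∫⁻ x in Sᶜ, A x (Prod.mk x ⁻¹' E) ∂P
        ≤ ∫⁻ _ in Sᶜ, 1 ∂P := lintegral_mono fun x => prob_le_one
      _ = P Sᶜ := by simp
      _ ≤ _ := hPSc
  have hexp := Real.exp_pos η
  rw [Measure.compProd_apply hEmeas, ← lintegral_add_compl _ hS]
  calc _ ≤ (ENNReal.ofReal (Real.exp η) * ENNReal.ofReal ν + ENNReal.ofReal τ)
        + ENNReal.ofReal ν := add_le_add hOnS hOffS
    _ = ENNReal.ofReal (Real.exp η * ν + τ + ν) := by
        rw [← ENNReal.ofReal_mul hexp.le, ← ENNReal.ofReal_add (by positivity) hτ,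
          ← ENNReal.ofReal_add (by positivity) hν]
    _ ≤ _ := ENNReal.ofReal_le_ofReal (by linarith)
end

section
/- (Typical stability of the Laplace mechanism.) Let P be a probability measure on X^n, let q : X^n → ℝ be a measurable query, let η > 0 and ν ∈ (0,1), and let α > 0 be such that Pr_{X∼P}[ |q(X) − μ_q| > α ] ≤ ν, where μ_q = E_{T∼P}[q(T)]. Consider the Laplace mechanism A that on input x ∈ X^n outputs q(x) + N with N ∼ Lap(α/η). Then A is (η, 0, ν)-typically stable with respect to P in the oracle sense; in particular, taking the oracle W to be the law of μ_q + Lap(α/η), for every x with |q(x) − μ_q| ≤ α and every measurable O ⊆ ℝ, Pr[q(x) + Lap(α/η) ∈ O] ≤ e^η · Pr[μ_q + Lap(α/η) ∈ O] and Pr[μ_q + Lap(α/η) ∈ O] ≤ e^η · Pr[q(x) + Lap(α/η) ∈ O]. -/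
/-!
The law of `c + Lap(b)` has density `t ↦ (1/(2b)) e^{-|t - c|/b}` (`lap_map_add_apply`). If
`|c - d| ≤ α` and `b = α/η`, the triangle inequality `|t - d| ≤ |t - c| + α` bounds the ratio of the
densities centred at `c` and `d` by `e^{α/b} = e^η` pointwise; integrating over `O` gives the
multiplicative bound (`lap_map_add_le`). It applies to `c = q x` and `d = μ_q` (and vice versa)
for every `x` outside the event `|q x - μ_q| > α`, whose complement has probability at least
`1 - ν`.
-/

open MeasureTheory ProbabilityTheory

/-- The Laplace distribution on `ℝ` with scale `b`, with density
`t ↦ (1/(2b)) e^{−|t|/b}` w.r.t. the Lebesgue measure. -/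
noncomputable def lap (b : ℝ) : Measure ℝ :=
  volume.withDensity (fun t => ENNReal.ofReal (Real.exp (-|t| / b) / (2 * b)))

theorem lap_map_add_apply (b c : ℝ) {O : Set ℝ} (hO : MeasurableSet O) :
    (lap b).map (fun t => c + t) O =
      ∫⁻ t in O, ENNReal.ofReal (Real.exp (-|t - c| / b) / (2 * b)) := by
  have hm : Measurable (fun t : ℝ => c + t) := measurable_const_add c
  rw [Measure.map_apply hm hO, lap, withDensity_apply _ (hm hO),
    ← (measurePreserving_add_left volume c).setLIntegral_comp_preimage hO (by fun_prop)]
  simp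

theorem lap_map_add_le {η α c d : ℝ} (hη : 0 < η) (hα : 0 < α) (hcd : |c - d| ≤ α)
    {O : Set ℝ} (hO : MeasurableSet O) :
    (lap (α / η)).map (fun t => c + t) O ≤
      ENNReal.ofReal (Real.exp η) * (lap (α / η)).map (fun t => d + t) O := by
  rw [lap_map_add_apply _ _ hO, lap_map_add_apply _ _ hO,
    ← lintegral_const_mul _ (by fun_prop)]
  refine lintegral_mono fun t => ?_
  have hb : 0 < α / η := div_pos hα hη
  rw [← ENNReal.ofReal_mul (Real.exp_pos η).le, ← mul_div_assoc (Real.exp η), ← Real.exp_add]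
  gcongr
  have htri : |t - d| ≤ |t - c| + α := (abs_sub_le t c d).trans (by gcongr)
  have hη' : η = α / (α / η) := by field_simp
  calc -|t - c| / (α / η) ≤ (α + -|t - d|) / (α / η) := by gcongr; linarith
    _ = η + -|t - d| / (α / η) := by rw [add_div, ← hη']

/-- typical stability of the Laplace mechanism: if
`Pr_{X∼P}[|q(X) − μ_q| > α] ≤ ν` where `μ_q = E_{T∼P}[q(T)]`, then the Laplace mechanism
`x ↦ q(x) + Lap(α/η)` is `(η, 0, ν)`-typically stable w.r.t. `P` in the oracle sense with
oracle `W = law of μ_q + Lap(α/η)`; in particular, for every `x` with `|q(x) − μ_q| ≤ α`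
and every measurable `O ⊆ ℝ`,
`Pr[q(x) + Lap(α/η) ∈ O] ≤ e^η Pr[μ_q + Lap(α/η) ∈ O]` and conversely. -/
theorem laplace_mechanism_typically_stable
    {X : Type*} [MeasurableSpace X]
    (P : Measure X) [IsProbabilityMeasure P]
    (q : X → ℝ) (hq : Measurable q)
    (η ν α : ℝ) (hη : 0 < η) (hν : ν ∈ Set.Ioo (0 : ℝ) 1) (hα : 0 < α)
    (hconc : P {x | |q x - ∫ t, q t ∂P| > α} ≤ ENNReal.ofReal ν) :
    (P {x | Indist η 0
          ((lap (α / η)).map (fun t => q x + t))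
          ((lap (α / η)).map (fun t => (∫ t, q t ∂P) + t))} ≥
        ENNReal.ofReal (1 - ν)) ∧
    ∀ x : X, |q x - ∫ t, q t ∂P| ≤ α → ∀ O : Set ℝ, MeasurableSet O →
      ((lap (α / η)).map (fun t => q x + t)) O ≤
          ENNReal.ofReal (Real.exp η) *
            ((lap (α / η)).map (fun t => (∫ t, q t ∂P) + t)) O ∧
      ((lap (α / η)).map (fun t => (∫ t, q t ∂P) + t)) O ≤
          ENNReal.ofReal (Real.exp η) *
            ((lap (α / η)).map (fun t => q x + t)) O := by
  have key : ∀ x : X, |q x - ∫ t, q t ∂P| ≤ α → ∀ O : Set ℝ, MeasurableSet O →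
      ((lap (α / η)).map (fun t => q x + t)) O ≤
          ENNReal.ofReal (Real.exp η) *
            ((lap (α / η)).map (fun t => (∫ t, q t ∂P) + t)) O ∧
      ((lap (α / η)).map (fun t => (∫ t, q t ∂P) + t)) O ≤
          ENNReal.ofReal (Real.exp η) *
            ((lap (α / η)).map (fun t => q x + t)) O := fun x hx O hO =>
    ⟨lap_map_add_le hη hα hx hO, lap_map_add_le hη hα (by rwa [abs_sub_comm]) hO⟩
  refine ⟨?_, key⟩
  have hmeas : MeasurableSet {x | |q x - ∫ t, q t ∂P| > α} :=
    measurableSet_lt measurable_const (hq.sub_const _).abs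
  calc ENNReal.ofReal (1 - ν) = 1 - ENNReal.ofReal ν := by
        rw [ENNReal.ofReal_sub _ hν.1.le, ENNReal.ofReal_one]
    _ ≤ 1 - P {x | |q x - ∫ t, q t ∂P| > α} := by gcongr
    _ = P {x | |q x - ∫ t, q t ∂P| > α}ᶜ := (prob_compl_eq_one_sub hmeas).symm
    _ ≤ _ := by
        refine measure_mono fun x hx O hO => ?_
        simpa using key x (not_lt.mp hx) O hO
end

section
/- (Typical stability of the Gaussian mechanism.) Let P be a probability measure on X^n, let q : X^n → ℝ be a measurable query, let η ∈ (0,1], τ ∈ (0,1), ν ∈ (0,1), and let α > 0 be such that Pr_{X∼P}[ |q(X) − μ_q| > α ] ≤ ν, where μ_q = E_{T∼P}[q(T)]. Set σ = α·√(2·ln(1.5/τ))/η, and consider the Gaussian mechanism A that on input x ∈ X^n outputs q(x) + N with N ∼ N(0, σ²). Then A is (η, τ, ν)-typically stable with respect to P in the oracle sense, with oracle W equal to the law of μ_q + N(0, σ²); in particular, for every x with |q(x) − μ_q| ≤ α, the law of q(x) + N(0, σ²) is (η, τ)-indistinguishable from the law of μ_q + N(0, σ²). -/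
/-! Write `V = σ²`, `c² = 2 log (1.5 / τ)`. The density ratio of `N(a, V)` to `N(b, V)`, `δ = a - b`, at
`x = a + y` is `exp ((2 y δ + δ²) / (2 V))`. For `0 < δ ≤ α` it is at most `e^η` unless
`y > T := V η / α - α / 2`, so the additive error is at most the Gaussian tail beyond `T`.
The tail bound `N(0, V)(T, ∞) ≤ (1/2) exp (-T² / (2 V))` together with
`T² / (2 V) ≥ c² / 2 - 1` gives at most `(1/2) e (τ / 1.5) ≤ τ`.
The case `δ < 0` follows by reflection. Stability holds for every `x` in the event `|q x - μ_q| ≤ α`,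
whose probability is at least `1 - ν`. -/

open MeasureTheory ProbabilityTheory

open scoped NNReal ENNReal

lemma gaussianReal_neg_apply (a : ℝ) (V : ℝ≥0) {O : Set ℝ} (hO : MeasurableSet O) :
    gaussianReal (-a) V ((fun x => -x) ⁻¹' O) = gaussianReal a V O := by
  rw [← Measure.map_apply measurable_neg hO]
  have h := gaussianReal_map_neg (μ := -a) (v := V)
  rw [neg_neg] at h
  exact congrArg (fun m : Measure ℝ => m O) h

lemma gaussianReal_Ioi_zero_le (V : ℝ≥0) : gaussianReal 0 V (Set.Ioi 0) ≤ 2⁻¹ := by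
  have h1 : gaussianReal 0 V (Set.Iio 0) = gaussianReal 0 V (Set.Ioi 0) := by
    have h := gaussianReal_neg_apply 0 V (measurableSet_Ioi (a := (0 : ℝ)))
    rw [neg_zero] at h
    rw [← h]
    congr 1
    ext x
    simp
  have h2 : gaussianReal 0 V (Set.Iio 0) + gaussianReal 0 V (Set.Ioi 0) ≤ 1 := by
    have hdisj : Disjoint (Set.Iio (0 : ℝ)) (Set.Ioi 0) :=
      Set.disjoint_left.2 fun x hx hx' => lt_asymm (Set.mem_Iio.1 hx) (Set.mem_Ioi.1 hx')
    rw [← measure_union hdisj measurableSet_Ioi]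
    exact prob_le_one
  rw [h1, ← two_mul] at h2
  rw [ENNReal.le_inv_iff_mul_le, mul_comm]
  exact h2

/-- Pointwise comparison of two Gaussian densities integrates to a comparison of measures. -/
lemma gaussianReal_le_mul_of_exponent_le {a b η : ℝ} {V : ℝ≥0} (hV : V ≠ 0) {O : Set ℝ}
    (hO : MeasurableSet O)
    (h : ∀ x ∈ O, (x - b) ^ 2 - (x - a) ^ 2 ≤ 2 * V * η) :
    gaussianReal a V O ≤ ENNReal.ofReal (Real.exp η) * gaussianReal b V O := by
  have hV' : (0 : ℝ) < V := by positivity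
  rw [gaussianReal_apply a hV, gaussianReal_apply b hV,
    ← lintegral_const_mul _ (measurable_gaussianPDF b V)]
  refine setLIntegral_mono' hO fun x hx => ?_
  rw [gaussianPDF, gaussianPDF, ← ENNReal.ofReal_mul (Real.exp_pos _).le]
  refine ENNReal.ofReal_le_ofReal ?_
  rw [gaussianPDFReal, gaussianPDFReal, mul_left_comm, ← Real.exp_add]
  refine mul_le_mul_of_nonneg_left (Real.exp_le_exp.2 ?_) (by positivity)
  have h3 : η + -(x - b) ^ 2 / (2 * V) - -(x - a) ^ 2 / (2 * V)
      = (2 * V * η - ((x - b) ^ 2 - (x - a) ^ 2)) / (2 * V) := by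
    field_simp
    ring
  have h4 : 0 ≤ (2 * V * η - ((x - b) ^ 2 - (x - a) ^ 2)) / (2 * V) :=
    div_nonneg (by linarith [h x hx]) (by positivity)
  linarith

/-- Gaussian tail bound. The factor `1/2` (sharper than Chernoff) comes from shifting the tail to the
half line, where `exp (-(u + t)² / (2 V)) ≤ exp (-t² / (2 V)) * exp (-u² / (2 V))`. -/
lemma gaussianReal_Ioi_le (a : ℝ) {V : ℝ≥0} (hV : V ≠ 0) {t : ℝ} (ht : 0 ≤ t) :
    gaussianReal a V (Set.Ioi (a + t)) ≤ ENNReal.ofReal (Real.exp (-t ^ 2 / (2 * V)) / 2) := by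
  have hV' : (0 : ℝ) < V := by positivity
  have h1 : gaussianReal a V (Set.Ioi (a + t)) = gaussianReal (-t) V (Set.Ioi 0) := by
    have h := gaussianReal_map_const_add (μ := a) (v := V) (-(a + t))
    have h' : a + -(a + t) = -t := by ring
    rw [h'] at h
    rw [← h, Measure.map_apply (by fun_prop) measurableSet_Ioi]
    congr 1
    ext x
    simp
  rw [h1]
  refine (gaussianReal_le_mul_of_exponent_le (b := 0) (η := -t ^ 2 / (2 * V)) hV measurableSet_Ioi
    fun x hx => ?_).trans ?_
  · have hx' : (0 : ℝ) < x := hx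
    have h2 : 2 * (V : ℝ) * (-t ^ 2 / (2 * V)) = -t ^ 2 := by field_simp
    rw [h2]
    nlinarith [mul_nonneg hx'.le ht]
  · rw [div_eq_mul_inv _ (2 : ℝ), ENNReal.ofReal_mul (Real.exp_pos _).le,
      ENNReal.ofReal_inv_of_pos two_pos, ENNReal.ofReal_ofNat]
    gcongr
    exact gaussianReal_Ioi_zero_le V

/-- Indistinguishability bound in one direction for a right shift: up to the deviation `V * η / α - α / 2` from `a`,
the density ratio is at most `e^η` for every shift of size at most `α`. -/
lemma gaussianReal_le_of_shift {a b η α τ : ℝ} {V : ℝ≥0} (hV : V ≠ 0)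
    (hα : 0 < α) (hab : b ≤ a) (hab' : a - b ≤ α) (hT : 0 ≤ V * η / α - α / 2)
    (hτ : Real.exp (-(V * η / α - α / 2) ^ 2 / (2 * V)) / 2 ≤ τ) {O : Set ℝ}
    (hO : MeasurableSet O) :
    gaussianReal a V O ≤ ENNReal.ofReal (Real.exp η) * gaussianReal b V O + ENNReal.ofReal τ := by
  set T := V * η / α - α / 2 with hTdef
  have hTα : 2 * α * T + α ^ 2 = 2 * V * η := by
    rw [hTdef]
    field_simp
    ring
  rw [← measure_inter_add_sdiff O (measurableSet_Ioi (a := a + T)), add_comm]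
  refine add_le_add ?_ ?_
  · refine (gaussianReal_le_mul_of_exponent_le (b := b) (η := η) hV
      (hO.diff measurableSet_Ioi) fun x hx => ?_).trans ?_
    · have hx' : x ≤ a + T := not_lt.1 hx.2
      have hδ : 0 ≤ a - b := sub_nonneg.2 hab
      nlinarith [mul_le_mul_of_nonneg_left hx' hδ, mul_le_mul_of_nonneg_right hab' hT,
        mul_le_mul hab' hab' hδ hα.le]
    · gcongr
      exact Set.sdiff_subset
  · exact (measure_mono Set.inter_subset_right).trans
      ((gaussianReal_Ioi_le a hV hT).trans (ENNReal.ofReal_le_ofReal hτ))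

lemma gaussianReal_le_of_abs_sub_le {a b η α τ : ℝ} {V : ℝ≥0} (hV : V ≠ 0)
    (hα : 0 < α) (hab : |a - b| ≤ α) (hT : 0 ≤ V * η / α - α / 2)
    (hτ : Real.exp (-(V * η / α - α / 2) ^ 2 / (2 * V)) / 2 ≤ τ) {O : Set ℝ}
    (hO : MeasurableSet O) :
    gaussianReal a V O ≤ ENNReal.ofReal (Real.exp η) * gaussianReal b V O + ENNReal.ofReal τ := by
  rcases le_total b a with h | h
  · exact gaussianReal_le_of_shift hV hα h ((le_abs_self _).trans hab) hT hτ hO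
  · rw [← gaussianReal_neg_apply a V hO, ← gaussianReal_neg_apply b V hO]
    exact gaussianReal_le_of_shift hV hα (neg_le_neg h)
      (by linarith [neg_abs_le (a - b)]) hT hτ (measurable_neg hO)

/-- With the calibrated variance, the threshold deviation is nonnegative and the tail beyond it is at
most `τ`. -/
lemma gaussian_calibration {η τ α V : ℝ} (hη : η ∈ Set.Ioc (0 : ℝ) 1) (hτ : τ ∈ Set.Ioo (0 : ℝ) 1)
    (hα : 0 < α) (hVdef : V = (α * Real.sqrt (2 * Real.log (1.5 / τ)) / η) ^ 2) :
    0 < V ∧ 0 ≤ V * η / α - α / 2 ∧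
      Real.exp (-(V * η / α - α / 2) ^ 2 / (2 * V)) / 2 ≤ τ := by
  obtain ⟨hη0, hη1⟩ := hη
  obtain ⟨hτ0, hτ1⟩ := hτ
  set L := Real.log (1.5 / τ) with hL
  have hL3 : 1 / 3 ≤ L := by
    have h1 : (1.5 : ℝ) ≤ 1.5 / τ := by
      rw [le_div_iff₀ hτ0]
      linarith
    have h2 := Real.one_sub_inv_le_log_of_pos (show (0 : ℝ) < 1.5 by norm_num)
    have h3 := Real.log_le_log (by norm_num) h1
    norm_num at h2 h3 ⊢
    rw [hL]
    norm_num
    linarith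
  have hL0 : 0 < L := by linarith
  have hV : V = α ^ 2 * (2 * L) / η ^ 2 := by
    rw [hVdef, div_pow, mul_pow, Real.sq_sqrt (by positivity)]
  have hT : V * η / α - α / 2 = α / η * (2 * L - η / 2) := by
    rw [hV]
    field_simp
  refine ⟨by rw [hV]; positivity, ?_, ?_⟩
  · rw [hT]
    exact mul_nonneg (by positivity) (by linarith)
  · have hE : -(V * η / α - α / 2) ^ 2 / (2 * V) = -L + η / 2 - η ^ 2 / (16 * L) := by
      rw [hT, hV]
      field_simp
      ring
    have h1 : -(V * η / α - α / 2) ^ 2 / (2 * V) ≤ 1 - L := by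
      have : 0 ≤ η ^ 2 / (16 * L) := by positivity
      rw [hE]
      linarith
    -- The bound `e^{1 - L} / 2 = e τ / 3` already suffices, since `e < 3`.
    have h2 : Real.exp (1 - L) = Real.exp 1 * (τ / 1.5) := by
      rw [Real.exp_sub, hL, Real.exp_log (by positivity)]
      field_simp
    have h3 := Real.exp_le_exp.2 h1
    have h4 := Real.exp_one_lt_d9
    rw [h2] at h3
    have h5 : Real.exp 1 * (τ / 1.5) ≤ 3 * (τ / 1.5) :=
      mul_le_mul_of_nonneg_right (by linarith) (by positivity)
    have h6 : 3 * (τ / 1.5) = 2 * τ := by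
      field_simp
      norm_num
    linarith

/-- typical stability of the Gaussian mechanism: if
`Pr_{X∼P}[|q(X) − μ_q| > α] ≤ ν` where `μ_q = E_{T∼P}[q(T)]`, and
`σ = α √(2 ln(1.5/τ)) / η` with `η ∈ (0,1]`, then the Gaussian mechanism
`x ↦ q(x) + N(0, σ²)` is `(η, τ, ν)`-typically stable w.r.t. `P` in the oracle sense
with oracle `W = law of μ_q + N(0, σ²)`; in particular, for every `x` with
`|q(x) − μ_q| ≤ α`, the law of `q(x) + N(0, σ²)` is `(η, τ)`-indistinguishable from the
law of `μ_q + N(0, σ²)`. -/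
theorem gaussian_mechanism_typically_stable
    {X : Type*} [MeasurableSpace X]
    (P : Measure X) [IsProbabilityMeasure P]
    (q : X → ℝ) (hq : Measurable q)
    (η τ ν α : ℝ) (hη : η ∈ Set.Ioc (0 : ℝ) 1) (hτ : τ ∈ Set.Ioo (0 : ℝ) 1)
    (hν : ν ∈ Set.Ioo (0 : ℝ) 1) (hα : 0 < α)
    (hconc : P {x | |q x - ∫ t, q t ∂P| > α} ≤ ENNReal.ofReal ν) :
    (P {x | Indist η τ
          ((gaussianReal 0 (Real.toNNReal ((α * Real.sqrt (2 * Real.log (1.5 / τ)) / η) ^ 2))).map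
            (fun t => q x + t))
          ((gaussianReal 0 (Real.toNNReal ((α * Real.sqrt (2 * Real.log (1.5 / τ)) / η) ^ 2))).map
            (fun t => (∫ t, q t ∂P) + t))} ≥
        ENNReal.ofReal (1 - ν)) ∧
    ∀ x : X, |q x - ∫ t, q t ∂P| ≤ α →
      Indist η τ
        ((gaussianReal 0 (Real.toNNReal ((α * Real.sqrt (2 * Real.log (1.5 / τ)) / η) ^ 2))).map
          (fun t => q x + t))
        ((gaussianReal 0 (Real.toNNReal ((α * Real.sqrt (2 * Real.log (1.5 / τ)) / η) ^ 2))).map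
          (fun t => (∫ t, q t ∂P) + t)) := by
  have key : ∀ x : X, |q x - ∫ t, q t ∂P| ≤ α →
      Indist η τ
        ((gaussianReal 0 (Real.toNNReal ((α * Real.sqrt (2 * Real.log (1.5 / τ)) / η) ^ 2))).map
          (fun t => q x + t))
        ((gaussianReal 0 (Real.toNNReal ((α * Real.sqrt (2 * Real.log (1.5 / τ)) / η) ^ 2))).map
          (fun t => (∫ t, q t ∂P) + t)) := by
    intro x hx O hO
    set V := Real.toNNReal ((α * Real.sqrt (2 * Real.log (1.5 / τ)) / η) ^ 2) with hVdef
    obtain ⟨hV, hT, htail⟩ := gaussian_calibration (V := (V : ℝ)) hη hτ hα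
      (by rw [hVdef, Real.coe_toNNReal _ (sq_nonneg _)])
    have hV0 : V ≠ 0 := fun h => by simp [h] at hV
    rw [gaussianReal_map_const_add, gaussianReal_map_const_add, zero_add, zero_add]
    exact ⟨gaussianReal_le_of_abs_sub_le hV0 hα hx hT htail hO,
      gaussianReal_le_of_abs_sub_le hV0 hα (by rwa [abs_sub_comm]) hT htail hO⟩
  refine ⟨?_, key⟩
  have hmeas : MeasurableSet {x | |q x - ∫ t, q t ∂P| > α} :=
    measurableSet_lt measurable_const (hq.sub_const _).abs
  have hsub : {x | |q x - ∫ t, q t ∂P| > α}ᶜ ⊆ {x | Indist η τ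
          ((gaussianReal 0 (Real.toNNReal ((α * Real.sqrt (2 * Real.log (1.5 / τ)) / η) ^ 2))).map
            (fun t => q x + t))
          ((gaussianReal 0 (Real.toNNReal ((α * Real.sqrt (2 * Real.log (1.5 / τ)) / η) ^ 2))).map
            (fun t => (∫ t, q t ∂P) + t))} := fun x hx => key x (not_lt.1 hx)
  refine le_trans ?_ (measure_mono hsub)
  rw [prob_compl_eq_one_sub hmeas, ENNReal.ofReal_sub _ hν.1.le, ENNReal.ofReal_one]
  exact tsub_le_tsub_left hconc 1
end
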